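/- arXiv:2308.14304 — 3 statements merged into one kernel-verified Lean document; each statement's English description precedes it below -/
import Mathlib

section
/- Let A ∈ ℝ^{n×n} be a positive semidefinite matrix, let r > 0 and ε ∈ (0, 0.1), and let B ∈ ℝ^{n×n} be a symmetric matrix satisfying: (1) ε ≤ (1/4)·exp(−4r); (2) A_{i,j} ∈ [exp(−r), exp(r)] for all i, j ∈ [n]; (3) (1−ε)·A ⪯ B ⪯ (1+ε)·A in the Loewner order. Then every entry of B satisfies B_{i,j} ∈ [(1−√ε)·exp(−r), (1+ε)·exp(r)]. -/
open Matrix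
open scoped BigOperators

/-- The Euclidean (`ℓ₂`) norm of a vector in `ℝ^n`. -/
noncomputable def vnorm {n : ℕ} (v : Fin n → ℝ) : ℝ :=
  Real.sqrt (∑ i, v i ^ 2)

/-- The minimum singular value `σ_min(A) = min_{‖x‖₂ = 1} ‖Ax‖₂`. -/
noncomputable def sigmaMin {n d : ℕ} (A : Matrix (Fin n) (Fin d) ℝ) : ℝ :=
  sInf {c : ℝ | ∃ x : Fin d → ℝ, vnorm x = 1 ∧ c = vnorm (A.mulVec x)}

/-- The maximum singular value (spectral / operator norm)
`σ_max(A) = ‖A‖ = max_{‖x‖₂ = 1} ‖Ax‖₂`. -/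
noncomputable def sigmaMax {n d : ℕ} (A : Matrix (Fin n) (Fin d) ℝ) : ℝ :=
  sSup {c : ℝ | ∃ x : Fin d → ℝ, vnorm x = 1 ∧ c = vnorm (A.mulVec x)}

/-- The condition number `κ(A) = σ_max(A) / σ_min(A)`. -/
noncomputable def kappa {n d : ℕ} (A : Matrix (Fin n) (Fin d) ℝ) : ℝ :=
  sigmaMax A / sigmaMin A

/-!
The principal `2 × 2` minors of a positive semidefinite matrix are nonnegative, so by AM-GM each
entry is bounded by the mean of the two diagonal entries in its row and column. Applying this to
both `ε • A ± (B - A)`, whose half-difference is `B - A` and whose half-sum is `ε • A`, gives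
`|B i j - A i j| ≤ ε * (A i i + A j j) / 2`. With `A` entrywise at most `exp r`, the error is at
most `ε * exp r`, and `ε ≤ exp (-4 * r)` makes this at most `√ε * exp (-r)`.
-/

section EntryBounds

open scoped ComplexOrder

variable {ι 𝕜 : Type*} [RCLike 𝕜]

theorem sq_norm_apply_le_of_posSemidef {M : Matrix ι ι 𝕜} (hM : M.PosSemidef) (i j : ι) :
    ‖M i j‖ ^ 2 ≤ RCLike.re (M i i) * RCLike.re (M j j) := by
  have hdet : 0 ≤ M i i * M j j - M i j * M j i := by
    simpa only [det_fin_two, submatrix_apply, cons_val_zero, cons_val_one]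
      using (hM.submatrix ![i, j]).det_nonneg
  have hoff : M i j * M j i = ((‖M i j‖ ^ 2 : ℝ) : 𝕜) := by
    rw [← hM.isHermitian.apply j i, RCLike.star_def, RCLike.mul_conj, RCLike.ofReal_pow]
  have hre := (RCLike.nonneg_iff.mp hdet).1
  rw [hoff, map_sub, RCLike.ofReal_re, RCLike.mul_re,
    (RCLike.nonneg_iff.mp (hM.diag_nonneg (i := i))).2] at hre
  linarith

theorem norm_apply_le_of_posSemidef {M : Matrix ι ι 𝕜} (hM : M.PosSemidef) (i j : ι) :
    ‖M i j‖ ≤ (RCLike.re (M i i) + RCLike.re (M j j)) / 2 := by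
  have hi : 0 ≤ RCLike.re (M i i) := (RCLike.nonneg_iff.mp hM.diag_nonneg).1
  have hj : 0 ≤ RCLike.re (M j j) := (RCLike.nonneg_iff.mp hM.diag_nonneg).1
  refine le_of_sq_le_sq ?_ (by positivity)
  linarith [sq_norm_apply_le_of_posSemidef hM i j,
    four_mul_le_sq_add (RCLike.re (M i i)) (RCLike.re (M j j))]

theorem norm_apply_le_of_posSemidef_sub_of_posSemidef_add {M N : Matrix ι ι 𝕜}
    (hsub : (N - M).PosSemidef) (hadd : (N + M).PosSemidef) (i j : ι) :
    ‖M i j‖ ≤ (RCLike.re (N i i) + RCLike.re (N j j)) / 2 := by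
  have htriangle : 2 * ‖M i j‖ ≤ ‖(N + M) i j‖ + ‖(N - M) i j‖ :=
    calc 2 * ‖M i j‖ = ‖(2 : 𝕜) * M i j‖ := by rw [norm_mul, RCLike.norm_two]
      _ = ‖(N + M) i j - (N - M) i j‖ := by
          rw [Matrix.add_apply, Matrix.sub_apply, add_sub_sub_cancel, two_mul]
      _ ≤ ‖(N + M) i j‖ + ‖(N - M) i j‖ := norm_sub_le _ _
  have hadd_le := norm_apply_le_of_posSemidef hadd i j
  have hsub_le := norm_apply_le_of_posSemidef hsub i j
  simp only [Matrix.add_apply, Matrix.sub_apply, map_add, map_sub] at hadd_le hsub_le htriangle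
  linarith

theorem norm_sub_apply_le_of_spectral_approx {A B : Matrix ι ι 𝕜} {ε : ℝ}
    (hlower : (B - (1 - ε) • A).PosSemidef) (hupper : ((1 + ε) • A - B).PosSemidef) (i j : ι) :
    ‖B i j - A i j‖ ≤ ε * ((RCLike.re (A i i) + RCLike.re (A j j)) / 2) := by
  have hsub : (ε • A - (B - A)).PosSemidef := by
    convert hupper using 1; module
  have hadd : (ε • A + (B - A)).PosSemidef := by
    convert hlower using 1; module
  have h := norm_apply_le_of_posSemidef_sub_of_posSemidef_add hsub hadd i j
  simp only [Matrix.sub_apply, Matrix.smul_apply, RCLike.smul_re] at h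
  linarith

end EntryBounds

theorem sqrt_mul_exp_le_exp_neg {r ε : ℝ} (h : ε ≤ Real.exp (-4 * r)) :
    √ε * Real.exp r ≤ Real.exp (-r) := by
  have hsq : Real.exp (-4 * r) = Real.exp (-2 * r) ^ 2 := by
    rw [← Real.exp_nat_mul]; ring_nf
  calc √ε * Real.exp r ≤ Real.exp (-2 * r) * Real.exp r := by
        gcongr
        exact Real.sqrt_le_iff.mpr ⟨(Real.exp_pos _).le, h.trans_eq hsq⟩
    _ = Real.exp (-r) := by rw [← Real.exp_add]; ring_nf

theorem entrywise_bounds_of_spectral_approx_general {ι : Type*} {A B : Matrix ι ι ℝ} {a b ε : ℝ}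
    (hε : 0 ≤ ε) (hab : √ε * b ≤ a) (hA : ∀ i j, A i j ∈ Set.Icc a b)
    (hlower : (B - (1 - ε) • A).PosSemidef) (hupper : ((1 + ε) • A - B).PosSemidef) (i j : ι) :
    B i j ∈ Set.Icc ((1 - √ε) * a) ((1 + ε) * b) := by
  have hdiff : |B i j - A i j| ≤ ε * b :=
    calc |B i j - A i j| ≤ ε * ((A i i + A j j) / 2) :=
          norm_sub_apply_le_of_spectral_approx hlower hupper i j
      _ ≤ ε * b := by gcongr; linarith [(hA i i).2, (hA j j).2]
  have herror : ε * b ≤ √ε * a :=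
    calc ε * b = √ε * (√ε * b) := by rw [← mul_assoc, Real.mul_self_sqrt hε]
      _ ≤ √ε * a := by gcongr
  obtain ⟨hge, hle⟩ := abs_le.mp hdiff
  obtain ⟨ha, hb⟩ := hA i j
  constructor <;> linarith

/-- Entrywise bounds on a spectral approximation of the attention kernel
matrix.  If `A` is PSD with entries in `[exp(-r), exp(r)]`, `ε ∈ (0, 0.1)` with
`ε ≤ (1/4)·exp(-4r)`, and `B` is symmetric with `(1-ε)·A ⪯ B ⪯ (1+ε)·A` in the Loewner
order, then every entry of `B` lies in `[(1-√ε)·exp(-r), (1+ε)·exp(r)]`. -/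
theorem entrywise_bounds_of_spectral_approx {n : ℕ}
    (A B : Matrix (Fin n) (Fin n) ℝ) (r ε : ℝ)
    (hr : 0 < r) (hε : ε ∈ Set.Ioo (0 : ℝ) 0.1)
    (hA : A.PosSemidef) (hBsymm : B.IsSymm)
    (hcond1 : ε ≤ (1 / 4) * Real.exp (-4 * r))
    (hcond2 : ∀ i j : Fin n, A i j ∈ Set.Icc (Real.exp (-r)) (Real.exp r))
    (hcond3lower : (B - (1 - ε) • A).PosSemidef)
    (hcond3upper : ((1 + ε) • A - B).PosSemidef) :
    ∀ i j : Fin n,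
      B i j ∈ Set.Icc ((1 - Real.sqrt ε) * Real.exp (-r)) ((1 + ε) * Real.exp r) :=
  entrywise_bounds_of_spectral_approx_general hε.1.le
    (sqrt_mul_exp_le_exp_neg (by linarith [Real.exp_pos (-4 * r)])) hcond2 hcond3lower hcond3upper
end

section
/- Let A ∈ ℝ^{n×d} have full column rank with condition number κ(A) = σ_max(A)/σ_min(A), let k ≥ 1 be an integer, and let b₀, b_k, b_{k+1} ∈ ℝ^d and ε_k, ε_{k+1} > 0 satisfy: (1) ‖(AᵀA)^k b_k − b₀‖₂ ≤ ε_k ‖b₀‖₂; (2) ‖b_k‖₂ ≤ 2 σ_min(A)^{-2k} ‖b₀‖₂; (3) ε_k ≤ 0.5 ε_{k+1}; (4) ‖AᵀA b_{k+1} − b_k‖₂ ≤ 0.1 ε_{k+1} κ(A)^{-2k} ‖b_k‖₂. Then ‖(AᵀA)^{k+1} b_{k+1} − b₀‖₂ ≤ ε_{k+1} ‖b₀‖₂. -/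
open Matrix
open scoped BigOperators

/-!
Telescope the error as
`(AᵀA)^(k+1) b_{k+1} - b₀ = (AᵀA)^k (AᵀA b_{k+1} - b_k) + ((AᵀA)^k b_k - b₀)`.
Applying `(AᵀA)^k` costs at most `σ_max ^ (2k)`, while the bounds on the residual and on `b_k`
contribute `κ ^ (-2k)` and `σ_min ^ (-2k)`. These powers cancel, so the first summand is at most
`0.1 · 2 · ε_{k+1} ‖b₀‖`; the second is at most `0.5 · ε_{k+1} ‖b₀‖`.
-/

theorem pow_succ_mulVec_sub {ι R : Type*} [Fintype ι] [DecidableEq ι] [Ring R]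
    (M : Matrix ι ι R) (k : ℕ) (x y z : ι → R) :
    (M ^ (k + 1)) *ᵥ x - z = (M ^ k) *ᵥ (M *ᵥ x - y) + ((M ^ k) *ᵥ y - z) := by
  rw [mulVec_sub, mulVec_mulVec, ← pow_succ, sub_add_sub_cancel]

section

open scoped Matrix.Norms.L2Operator

variable {n d : ℕ}

theorem vnorm_eq_norm (v : Fin n → ℝ) : vnorm v = ‖WithLp.toLp 2 v‖ := by
  simp only [vnorm, EuclideanSpace.norm_eq, Real.norm_eq_abs, sq_abs]

theorem vnorm_nonneg (v : Fin n → ℝ) : 0 ≤ vnorm v :=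
  Real.sqrt_nonneg _

theorem vnorm_add_le (v w : Fin n → ℝ) : vnorm (v + w) ≤ vnorm v + vnorm w := by
  simp only [vnorm_eq_norm, WithLp.toLp_add]
  exact norm_add_le _ _

theorem vnorm_mulVec_le (A : Matrix (Fin n) (Fin d) ℝ) (x : Fin d → ℝ) :
    vnorm (A *ᵥ x) ≤ ‖A‖ * vnorm x := by
  simp only [vnorm_eq_norm]
  exact l2_opNorm_mulVec A (WithLp.toLp 2 x)

theorem vnorm_pow_mulVec_le (M : Matrix (Fin d) (Fin d) ℝ) (k : ℕ) (x : Fin d → ℝ) :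
    vnorm ((M ^ k) *ᵥ x) ≤ ‖M‖ ^ k * vnorm x := by
  induction k with
  | zero => simp only [pow_zero, one_mulVec, one_mul, le_refl]
  | succ k ih =>
    calc vnorm ((M ^ (k + 1)) *ᵥ x) = vnorm (M *ᵥ ((M ^ k) *ᵥ x)) := by
          rw [mulVec_mulVec, pow_succ']
      _ ≤ ‖M‖ * vnorm ((M ^ k) *ᵥ x) := vnorm_mulVec_le M _
      _ ≤ ‖M‖ * (‖M‖ ^ k * vnorm x) := by gcongr
      _ = ‖M‖ ^ (k + 1) * vnorm x := by ring

variable (A : Matrix (Fin n) (Fin d) ℝ)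

theorem sigmaMax_eq_l2_opNorm : sigmaMax A = ‖A‖ := by
  rw [l2_opNorm_def, ← ContinuousLinearMap.sSup_sphere_eq_norm, sigmaMax]
  congr 1
  ext c
  constructor
  · rintro ⟨x, hx, rfl⟩
    exact ⟨WithLp.toLp 2 x, by simpa [vnorm_eq_norm] using hx, (vnorm_eq_norm _).symm⟩
  · rintro ⟨x, hx, rfl⟩
    exact ⟨x.ofLp, by simpa [vnorm_eq_norm] using hx, (vnorm_eq_norm _).symm⟩

theorem vnorm_gram_pow_mulVec_le (k : ℕ) (x : Fin d → ℝ) :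
    vnorm (((Aᵀ * A) ^ k) *ᵥ x) ≤ sigmaMax A ^ (2 * k) * vnorm x := by
  have norm_gram : ‖Aᵀ * A‖ = sigmaMax A ^ 2 := by
    rw [← conjTranspose_eq_transpose_of_trivial, l2_opNorm_conjTranspose_mul_self,
      sigmaMax_eq_l2_opNorm, sq]
  simpa only [norm_gram, ← pow_mul] using vnorm_pow_mulVec_le (Aᵀ * A) k x

theorem sigmaMin_nonneg : 0 ≤ sigmaMin A :=
  Real.sInf_nonneg <| by
    rintro c ⟨x, -, rfl⟩
    exact vnorm_nonneg _

theorem sigmaMax_nonneg : 0 ≤ sigmaMax A := by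
  rw [sigmaMax_eq_l2_opNorm]
  exact norm_nonneg A

/-- Not an equality: with `0⁻¹ = 0` the product vanishes as soon as `σ_max` or `σ_min` does, for
instance when `d = 0`. -/
theorem sigmaMax_mul_inv_kappa_mul_inv_sigmaMin_le_one :
    sigmaMax A * (kappa A)⁻¹ * (sigmaMin A)⁻¹ ≤ 1 :=
  calc sigmaMax A * (kappa A)⁻¹ * (sigmaMin A)⁻¹
      = sigmaMax A / sigmaMax A * (sigmaMin A / sigmaMin A) := by
        rw [kappa, inv_div]
        ring
    _ ≤ 1 := mul_le_one₀ (div_self_le_one _)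
        (div_nonneg (sigmaMin_nonneg A) (sigmaMin_nonneg A)) (div_self_le_one _)

theorem vnorm_gram_pow_mulVec_le_of_le_inv_kappa_pow
    {k : ℕ} {r y b : Fin d → ℝ} {δ C : ℝ} (hδ : 0 ≤ δ) (hC : 0 ≤ C)
    (hr : vnorm r ≤ δ * (kappa A ^ (2 * k))⁻¹ * vnorm y)
    (hy : vnorm y ≤ C * (sigmaMin A ^ (2 * k))⁻¹ * vnorm b) :
    vnorm (((Aᵀ * A) ^ k) *ᵥ r) ≤ δ * C * vnorm b := by
  have hσ := sigmaMax_nonneg A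
  have hb := vnorm_nonneg b
  have hσmin := sigmaMin_nonneg A
  have hκ : 0 ≤ kappa A := div_nonneg hσ hσmin
  calc vnorm (((Aᵀ * A) ^ k) *ᵥ r)
      ≤ sigmaMax A ^ (2 * k) * vnorm r := vnorm_gram_pow_mulVec_le A k r
    _ ≤ sigmaMax A ^ (2 * k) * (δ * (kappa A ^ (2 * k))⁻¹ * vnorm y) := by gcongr
    _ ≤ sigmaMax A ^ (2 * k) *
          (δ * (kappa A ^ (2 * k))⁻¹ * (C * (sigmaMin A ^ (2 * k))⁻¹ * vnorm b)) := by gcongr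
    _ = (sigmaMax A * (kappa A)⁻¹ * (sigmaMin A)⁻¹) ^ (2 * k) * (δ * C * vnorm b) := by ring
    _ ≤ 1 * (δ * C * vnorm b) := by
        gcongr
        exact pow_le_one₀ (by positivity) (sigmaMax_mul_inv_kappa_mul_inv_sigmaMin_le_one A)
    _ = δ * C * vnorm b := one_mul _

end

/-- Error-propagation step of the induction for even power regression:
given the inductive error bounds at step `k` and an approximate PSD regression solve
producing `b_{k+1}`, the error bound at step `k+1` holds. -/
theorem even_power_induction_error {n d : ℕ} (A : Matrix (Fin n) (Fin d) ℝ)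
    (hrank : A.rank = d) (k : ℕ) (hk : 1 ≤ k)
    (b0 bk bk1 : Fin d → ℝ) (εk εk1 : ℝ) (hεk : 0 < εk) (hεk1 : 0 < εk1)
    (h1 : vnorm (((Aᵀ * A) ^ k).mulVec bk - b0) ≤ εk * vnorm b0)
    (h2 : vnorm bk ≤ 2 * ((sigmaMin A) ^ (2 * k))⁻¹ * vnorm b0)
    (h3 : εk ≤ 0.5 * εk1)
    (h4 : vnorm ((Aᵀ * A).mulVec bk1 - bk)
        ≤ 0.1 * εk1 * ((kappa A) ^ (2 * k))⁻¹ * vnorm bk) :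
    vnorm (((Aᵀ * A) ^ (k + 1)).mulVec bk1 - b0) ≤ εk1 * vnorm b0 := by
  have hb0 := vnorm_nonneg b0
  have solve_error :=
    vnorm_gram_pow_mulVec_le_of_le_inv_kappa_pow A (by positivity) zero_le_two h4 h2
  calc vnorm (((Aᵀ * A) ^ (k + 1)).mulVec bk1 - b0)
      = vnorm (((Aᵀ * A) ^ k).mulVec ((Aᵀ * A).mulVec bk1 - bk)
          + (((Aᵀ * A) ^ k).mulVec bk - b0)) := by rw [pow_succ_mulVec_sub _ k bk1 bk b0]
    _ ≤ vnorm (((Aᵀ * A) ^ k).mulVec ((Aᵀ * A).mulVec bk1 - bk))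
          + vnorm (((Aᵀ * A) ^ k).mulVec bk - b0) := vnorm_add_le _ _
    _ ≤ 0.1 * εk1 * 2 * vnorm b0 + εk * vnorm b0 := add_le_add solve_error h1
    _ ≤ 0.1 * εk1 * 2 * vnorm b0 + 0.5 * εk1 * vnorm b0 := by gcongr
    _ = 0.7 * (εk1 * vnorm b0) := by ring
    _ ≤ εk1 * vnorm b0 := mul_le_of_le_one_left (by positivity) (by norm_num)
end

section
/- Let A ∈ ℝ^{n×d} have full column rank with condition number κ(A) = σ_max(A)/σ_min(A), let b₄ ∈ ℝ^d, let ε₄ ∈ (0,1), and set ε₂ = 0.1·ε₄/κ(A)² (so ε₂ < 1). Suppose y' ∈ ℝ^d satisfies ‖AᵀA y' − b₄‖₂ ≤ ε₂ ‖b₄‖₂ and x' ∈ ℝ^d satisfies ‖AᵀA x' − y'‖₂ ≤ ε₂ ‖y'‖₂. Then ‖AᵀA AᵀA x' − b₄‖₂ ≤ ε₄ ‖b₄‖₂. -/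
open Matrix
open scoped BigOperators

/-!
Replacing `AᵀA x'` by `y'` in the outer regression costs `‖AᵀA (AᵀA x' - y')‖ ≤ σ_max² ε₂ ‖y'‖`,
and `y'` is controlled by the right-hand side through `σ_min² ‖y'‖ ≤ ‖AᵀA y'‖ ≤ (1 + ε₂) ‖b₄‖`.
The total error is therefore at most `(κ² ε₂ (1 + ε₂) + ε₂) ‖b₄‖`; since `κ² ε₂ = ε₄ / 10` and
`κ ≥ 1`, this is below `ε₄ ‖b₄‖`. None of this uses matrices: `σ_max` is an operator norm, and
the lower bound for `AᵀA` is Cauchy-Schwarz applied to `‖A x‖² = ⟪AᵀA x, x⟫`.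
-/

lemma norm_map_sub_le_of_norm_sub_le {E F 𝓕 : Type*} [SeminormedAddCommGroup E]
    [SeminormedAddCommGroup F] [FunLike 𝓕 E F] [AddMonoidHomClass 𝓕 E F] (f : 𝓕)
    {c C δ ε : ℝ} (hc : 0 < c) (hC : 0 ≤ C) (hδ : 0 ≤ δ) (hlower : ∀ x, c * ‖x‖ ≤ ‖f x‖)
    (hupper : ∀ x, ‖f x‖ ≤ C * ‖x‖) {y z : E} {b : F} (hy : ‖f y - b‖ ≤ ε * ‖b‖)
    (hz : ‖z - y‖ ≤ δ * ‖y‖) :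
    ‖f z - b‖ ≤ (C / c * δ * (1 + ε) + ε) * ‖b‖ := by
  have norm_y_le : ‖y‖ ≤ (1 + ε) * ‖b‖ / c := by
    rw [le_div_iff₀' hc]
    calc c * ‖y‖ ≤ ‖f y‖ := hlower y
      _ ≤ ‖b‖ + ‖f y - b‖ := norm_le_insert' _ _
      _ ≤ (1 + ε) * ‖b‖ := by linarith
  calc ‖f z - b‖ = ‖f (z - y) + (f y - b)‖ := by rw [map_sub, sub_add_sub_cancel]
    _ ≤ ‖f (z - y)‖ + ‖f y - b‖ := norm_add_le _ _
    _ ≤ C * (δ * ((1 + ε) * ‖b‖ / c)) + ε * ‖b‖ := by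
      gcongr
      exact (hupper _).trans (by gcongr; exact hz.trans (by gcongr))
    _ = (C / c * δ * (1 + ε) + ε) * ‖b‖ := by ring

section MinModulus

variable {𝕜 E F : Type*} [RCLike 𝕜] [NormedAddCommGroup E] [NormedSpace 𝕜 E]
  [NormedAddCommGroup F] [NormedSpace 𝕜 F]

/-- The minimum modulus of an operator, the analogue of `σ_min`. It is `0` by convention when `E`
is trivial, the unit sphere then being empty. -/
noncomputable def minModulus (T : E →L[𝕜] F) : ℝ :=
  sInf ((fun x => ‖T x‖) '' Metric.sphere 0 1)

/-- The condition number of an operator, in the normalization of `kappa`. -/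
noncomputable def condNumber (T : E →L[𝕜] F) : ℝ :=
  ‖T‖ / minModulus T

lemma minModulus_nonneg (T : E →L[𝕜] F) : 0 ≤ minModulus T :=
  Real.sInf_nonneg (Set.forall_mem_image.2 fun _ _ => norm_nonneg _)

lemma minModulus_mul_norm_le (T : E →L[𝕜] F) (x : E) : minModulus T * ‖x‖ ≤ ‖T x‖ := by
  obtain rfl | hx := eq_or_ne x 0
  · simp
  have bddBelow : BddBelow ((fun x => ‖T x‖) '' Metric.sphere 0 1) :=
    ⟨0, Set.forall_mem_image.2 fun _ _ => norm_nonneg _⟩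
  have unit_mem : ((‖x‖⁻¹ : ℝ) : 𝕜) • x ∈ Metric.sphere (0 : E) 1 := by
    simp [norm_smul, hx]
  rw [← le_div_iff₀ (norm_pos_iff.2 hx)]
  calc minModulus T ≤ ‖T (((‖x‖⁻¹ : ℝ) : 𝕜) • x)‖ := csInf_le bddBelow ⟨_, unit_mem, rfl⟩
    _ = ‖T x‖ / ‖x‖ := by
      rw [map_smul, norm_smul, RCLike.norm_ofReal, abs_of_nonneg (by positivity), inv_mul_eq_div]

lemma minModulus_le_norm [Nontrivial E] (T : E →L[𝕜] F) : minModulus T ≤ ‖T‖ := by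
  obtain ⟨x, hx⟩ := exists_ne (0 : E)
  exact le_of_mul_le_mul_right ((minModulus_mul_norm_le T x).trans (T.le_opNorm x))
    (norm_pos_iff.2 hx)

lemma minModulus_pos [Nontrivial E] {T : E →L[𝕜] F} {K : NNReal} (hT : AntilipschitzWith K T) :
    0 < minModulus T := by
  have one_le {x : E} (hx : ‖x‖ = 1) : 1 ≤ K * ‖T x‖ := hx ▸ hT.le_mul_norm (map_zero T) x
  have sphere_nonempty : (Metric.sphere (0 : E) 1).Nonempty :=
    letI := NormedSpace.restrictScalars ℝ 𝕜 E
    NormedSpace.sphere_nonempty.2 zero_le_one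
  obtain ⟨u, hu⟩ := sphere_nonempty
  have K_pos : (0 : ℝ) < K :=
    pos_of_mul_pos_left (one_pos.trans_le (one_le (mem_sphere_zero_iff_norm.1 hu))) (norm_nonneg _)
  refine (inv_pos.2 K_pos).trans_le (le_csInf ⟨_, u, hu, rfl⟩ (Set.forall_mem_image.2 ?_))
  exact fun x hx => (inv_le_iff_one_le_mul₀' K_pos).2 (one_le (mem_sphere_zero_iff_norm.1 hx))

lemma one_le_condNumber [Nontrivial E] {T : E →L[𝕜] F} {K : NNReal}
    (hT : AntilipschitzWith K T) : 1 ≤ condNumber T :=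
  (one_le_div (minModulus_pos hT)).2 (minModulus_le_norm T)

end MinModulus

section Gram

open scoped InnerProduct

variable {𝕜 E F : Type*} [RCLike 𝕜] [NormedAddCommGroup E] [InnerProductSpace 𝕜 E]
  [CompleteSpace E] [NormedAddCommGroup F] [InnerProductSpace 𝕜 F] [CompleteSpace F]

lemma minModulus_sq_mul_norm_le (T : E →L[𝕜] F) (x : E) :
    minModulus T ^ 2 * ‖x‖ ≤ ‖(T† ∘L T) x‖ := by
  obtain rfl | hx := eq_or_ne x 0
  · simp
  refine le_of_mul_le_mul_right ?_ (norm_pos_iff.2 hx)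
  calc minModulus T ^ 2 * ‖x‖ * ‖x‖ = (minModulus T * ‖x‖) ^ 2 := by ring
    _ ≤ ‖T x‖ ^ 2 := by
      have := minModulus_nonneg T
      gcongr
      exact minModulus_mul_norm_le T x
    _ = RCLike.re (inner 𝕜 ((T† ∘L T) x) x) := T.apply_norm_sq_eq_inner_adjoint_left x
    _ ≤ ‖(T† ∘L T) x‖ * ‖x‖ := re_inner_le_norm _ _

lemma norm_adjoint_comp_self_apply_sub_le [Nontrivial E] {T : E →L[𝕜] F} {K : NNReal}
    (hT : AntilipschitzWith K T) {δ ε : ℝ} (hδ : 0 ≤ δ) {y z b : E}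
    (hy : ‖(T† ∘L T) y - b‖ ≤ ε * ‖b‖) (hz : ‖z - y‖ ≤ δ * ‖y‖) :
    ‖(T† ∘L T) z - b‖ ≤ (condNumber T ^ 2 * δ * (1 + ε) + ε) * ‖b‖ := by
  rw [condNumber, div_pow]
  refine norm_map_sub_le_of_norm_sub_le (T† ∘L T) (pow_pos (minModulus_pos hT) 2) (by positivity)
    hδ (minModulus_sq_mul_norm_le T) (fun x => ?_) hy hz
  rw [sq, ← T.norm_adjoint_comp_self]
  exact (T† ∘L T).le_opNorm x

theorem four_matrix_regression_error_general (T : E →L[𝕜] F) {K : NNReal}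
    (hT : AntilipschitzWith K T) {b₄ : E} {ε₂ ε₄ : ℝ} (hε₄ : ε₄ ∈ Set.Ioo (0 : ℝ) 1)
    (hε₂ : ε₂ = 0.1 * ε₄ / condNumber T ^ 2) {y' x' : E}
    (hy : ‖(T† ∘L T) y' - b₄‖ ≤ ε₂ * ‖b₄‖) (hx : ‖(T† ∘L T) x' - y'‖ ≤ ε₂ * ‖y'‖) :
    ‖(T† ∘L T) ((T† ∘L T) x') - b₄‖ ≤ ε₄ * ‖b₄‖ := by
  obtain ⟨ε₄_pos, ε₄_lt_one⟩ := hε₄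
  obtain _ | _ := subsingleton_or_nontrivial E
  · simp [Subsingleton.elim _ (0 : E)]
  have one_le_sq : 1 ≤ condNumber T ^ 2 := one_le_pow₀ (one_le_condNumber hT)
  have sq_mul_ε₂ : condNumber T ^ 2 * ε₂ = 0.1 * ε₄ := by
    rw [hε₂, mul_div_cancel₀ _ (by positivity)]
  have ε₂_nonneg : 0 ≤ ε₂ := hε₂ ▸ by positivity
  have ε₂_le : ε₂ ≤ 0.1 * ε₄ := sq_mul_ε₂ ▸ le_mul_of_one_le_left ε₂_nonneg one_le_sq
  calc ‖(T† ∘L T) ((T† ∘L T) x') - b₄‖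
      ≤ (condNumber T ^ 2 * ε₂ * (1 + ε₂) + ε₂) * ‖b₄‖ :=
        norm_adjoint_comp_self_apply_sub_le hT ε₂_nonneg hy hx
    _ ≤ ε₄ * ‖b₄‖ := by
      rw [sq_mul_ε₂]
      gcongr
      nlinarith

end Gram

section Euclidean

open WithLp
open scoped InnerProduct

/-- The operator between Euclidean spaces given by a rectangular matrix; for square matrices
Mathlib has it as `Matrix.toEuclideanCLM`. -/
noncomputable def euclideanCLM {𝕜 m n : Type*} [RCLike 𝕜] [Fintype m] [Fintype n] [DecidableEq n]
    (A : Matrix m n 𝕜) : EuclideanSpace 𝕜 n →L[𝕜] EuclideanSpace 𝕜 m :=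
  (toEuclideanLin A).toContinuousLinearMap

lemma euclideanCLM_conjTranspose_mul_self {𝕜 m n : Type*} [RCLike 𝕜] [Fintype m] [Fintype n]
    [DecidableEq n] (A : Matrix m n 𝕜) :
    euclideanCLM (Aᴴ * A) = (euclideanCLM A)† ∘L euclideanCLM A := by
  classical
  rw [euclideanCLM, toLpLin_mul 2 2 2, toEuclideanLin_conjTranspose_eq_adjoint]
  rfl

lemma exists_antilipschitzWith_euclideanCLM {𝕜 m n : Type*} [RCLike 𝕜] [Fintype m] [Fintype n]
    [DecidableEq n] {A : Matrix m n 𝕜} (hA : A.rank = Fintype.card n) :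
    ∃ K, AntilipschitzWith K (euclideanCLM A) := by
  have mulVec_injective : Function.Injective A.mulVec := by
    rw [mulVec_injective_iff, linearIndependent_iff_card_eq_finrank_span, Set.finrank,
      ← rank_eq_finrank_span_cols, hA]
  have ker_eq_bot : LinearMap.ker (toEuclideanLin A) = ⊥ := LinearMap.ker_eq_bot.2 <|
    (toLp_injective 2).comp (mulVec_injective.comp (ofLp_injective 2))
  obtain ⟨K, -, hK⟩ := (toEuclideanLin A).exists_antilipschitzWith ker_eq_bot
  exact ⟨K, hK⟩

variable {n d : ℕ}

lemma vnorm_eq_norm_toLp (v : Fin n → ℝ) : vnorm v = ‖toLp 2 v‖ := by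
  simp [vnorm, EuclideanSpace.norm_eq]

lemma setOf_vnorm_mulVec_eq_image_sphere (A : Matrix (Fin n) (Fin d) ℝ) :
    {c : ℝ | ∃ x : Fin d → ℝ, vnorm x = 1 ∧ c = vnorm (A.mulVec x)} =
      (fun x => ‖euclideanCLM A x‖) '' Metric.sphere 0 1 := by
  ext c
  simp only [vnorm_eq_norm_toLp, Set.mem_ofPred_eq, Set.mem_image, mem_sphere_zero_iff_norm,
    eq_comm (a := c)]
  exact (WithLp.equiv 2 _).symm.exists_congr_left

lemma kappa_eq_condNumber (A : Matrix (Fin n) (Fin d) ℝ) :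
    kappa A = condNumber (euclideanCLM A) := by
  rw [kappa, sigmaMax, sigmaMin, setOf_vnorm_mulVec_eq_image_sphere,
    ContinuousLinearMap.sSup_sphere_eq_norm, condNumber, minModulus]

lemma toLp_transpose_mul_self_mulVec (A : Matrix (Fin n) (Fin d) ℝ) (x : Fin d → ℝ) :
    toLp 2 ((Aᵀ * A).mulVec x) = ((euclideanCLM A)† ∘L euclideanCLM A) (toLp 2 x) := by
  rw [← euclideanCLM_conjTranspose_mul_self, conjTranspose_eq_transpose_of_trivial]
  rfl

end Euclidean

/-- Error guarantee for the four-matrix regression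
`min_x ‖AᵀA AᵀA x - b₄‖₂`, solved by two successive approximate PSD regressions with
accuracy `ε₂ = 0.1·ε₄/κ(A)²`. -/
theorem four_matrix_regression_error {n d : ℕ} (A : Matrix (Fin n) (Fin d) ℝ)
    (hrank : A.rank = d) (b₄ : Fin d → ℝ)
    (ε₂ ε₄ : ℝ) (hε₄ : ε₄ ∈ Set.Ioo (0 : ℝ) 1)
    (hε₂ : ε₂ = 0.1 * ε₄ / (kappa A) ^ 2)
    (y' x' : Fin d → ℝ)
    (hy : vnorm ((Aᵀ * A).mulVec y' - b₄) ≤ ε₂ * vnorm b₄)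
    (hx : vnorm ((Aᵀ * A).mulVec x' - y') ≤ ε₂ * vnorm y') :
    vnorm ((Aᵀ * A * (Aᵀ * A)).mulVec x' - b₄) ≤ ε₄ * vnorm b₄ := by
  obtain ⟨K, hK⟩ := exists_antilipschitzWith_euclideanCLM (hrank.trans (Fintype.card_fin d).symm)
  simp only [← mulVec_mulVec _ (Aᵀ * A), vnorm_eq_norm_toLp, WithLp.toLp_sub,
    toLp_transpose_mul_self_mulVec] at hy hx ⊢
  exact four_matrix_regression_error_general _ hK hε₄ (kappa_eq_condNumber A ▸ hε₂) hy hx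
end
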